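/- Consider the CHSH scenario with two binary ±1 observables per party and the CHSH quantity β_CHSH(p) = ⟨A₁B₁⟩ + ⟨A₁B₂⟩ + ⟨A₂B₁⟩ − ⟨A₂B₂⟩. For every bipartite no-signaling box p in which Bob's observable B₁ is deterministic (Bob's marginal output distribution at y = 1 is a point mass), β_CHSH(p) ≤ 2; moreover, this bound is attained by a no-signaling box with deterministic B₁. Consequently, since the maximal no-signaling value of β_CHSH is 4, the relevance of B₁ for the CHSH inequality is w_CHSH = 4 − 2 = 2. -/

import Mathlib

open Finset

/-- The sign `±1` associated with a binary output. -/
def sgn (b : Bool) : ℝ := if b then 1 else -1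

/-- A bipartite no-signaling box with binary outputs. -/
def IsNSBox {n m : ℕ} (p : Bool → Bool → Fin n → Fin m → ℝ) : Prop :=
  (∀ a b x y, 0 ≤ p a b x y) ∧
  (∀ x y, ∑ a, ∑ b, p a b x y = 1) ∧
  (∀ a x y y', ∑ b, p a b x y = ∑ b, p a b x y') ∧
  (∀ b y x x', ∑ a, p a b x y = ∑ a, p a b x' y)

/-- The correlator `⟨A_x B_y⟩` of a bipartite box with binary `±1` outputs. -/
def corr {n m : ℕ} (p : Bool → Bool → Fin n → Fin m → ℝ)
    (x : Fin n) (y : Fin m) : ℝ :=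
  ∑ a, ∑ b, sgn a * sgn b * p a b x y

/-- Bob's observable `B₁` (input `y = 1`, i.e. `0 : Fin m`) is deterministic. -/
def DetB1 {n m : ℕ} [NeZero m] (p : Bool → Bool → Fin n → Fin m → ℝ) : Prop :=
  ∃ b0 : Bool, ∀ x b, (∑ a, p a b x 0) = if b = b0 then 1 else 0

/-- The CHSH quantity `⟨A₁B₁⟩ + ⟨A₁B₂⟩ + ⟨A₂B₁⟩ − ⟨A₂B₂⟩`. -/
def chsh (p : Bool → Bool → Fin 2 → Fin 2 → ℝ) : ℝ :=
  corr p 0 0 + corr p 0 1 + corr p 1 0 - corr p 1 1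

/-- The maximal no-signaling value of the CHSH quantity is `4` (attained by the PR box). -/
theorem chsh_ns_max :
    IsGreatest {v : ℝ | ∃ p : Bool → Bool → Fin 2 → Fin 2 → ℝ, IsNSBox p ∧ v = chsh p} 4 := by
  refine ⟨⟨fun a b x y => if (a = b) ↔ ¬ (x = 1 ∧ y = 1) then 1 / 2 else 0,
      ⟨?_, ?_, ?_, ?_⟩, ?_⟩, ?_⟩
  · intro a b x y
    dsimp only
    split_ifs <;> norm_num
  · intro x y; fin_cases x <;> fin_cases y <;> simp <;> norm_num
  · intro a x y y'
    fin_cases x <;> fin_cases y <;> fin_cases y' <;> cases a <;> simp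
  · intro b y x x'
    fin_cases x <;> fin_cases y <;> fin_cases x' <;> cases b <;> simp
  · simp [chsh, corr, sgn]; norm_num
  · rintro v ⟨p, ⟨n, e1, -, -⟩, rfl⟩
    simp only [Fintype.sum_bool] at e1
    simp only [chsh, corr, sgn, Fintype.sum_bool, if_true, Bool.false_eq_true, if_false]
    linarith [e1 0 0, e1 0 1, e1 1 0, e1 1 1,
      n true true 0 0, n true false 0 0, n false true 0 0, n false false 0 0,
      n true true 0 1, n true false 0 1, n false true 0 1, n false false 0 1,
      n true true 1 0, n true false 1 0, n false true 1 0, n false false 1 0,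
      n true true 1 1, n true false 1 1, n false true 1 1, n false false 1 1]

/-- The maximum of the CHSH quantity over no-signaling boxes in which `B₁` is deterministic
equals `2` (the bound holds and is attained); consequently, the maximal no-signaling value
being `4`, the relevance of `B₁` for the CHSH inequality is `w_CHSH = 4 − 2 = 2`. -/
theorem chsh_relevance :
    IsGreatest {v : ℝ | ∃ p : Bool → Bool → Fin 2 → Fin 2 → ℝ,
        IsNSBox p ∧ DetB1 p ∧ v = chsh p} 2 ∧
      (4 : ℝ) - 2 = 2 := by
  refine ⟨⟨?_, ?_⟩, by norm_num⟩
  · refine ⟨fun a b _ _ => if a = true ∧ b = true then 1 else 0,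
      ⟨?_, ?_, ?_, ?_⟩, ⟨true, ?_⟩, ?_⟩
    · intro a b x y
      dsimp only
      split_ifs <;> norm_num
    · intro x y; simp only [Fintype.sum_bool]; norm_num
    · intro a x y y'; rfl
    · intro b y x x'; rfl
    · intro x b; cases b <;> simp
    · simp [chsh, corr, sgn]; norm_num
  · rintro v ⟨p, ⟨h0, h1, h2, h3⟩, ⟨b0, hb⟩, rfl⟩
    have e1 := fun x y => h1 x y
    have e2 := fun a x => h2 a x 0 1
    have e3 := fun b y => h3 b y 0 1
    simp only [Fintype.sum_bool] at e1 e2 e3 hb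
    simp only [chsh, corr, sgn, Fintype.sum_bool, if_true, Bool.false_eq_true, if_false]
    have n := h0
    have hb0 := hb 0 true
    have hb1 := hb 1 true
    have hb2 := hb 0 false
    have hb3 := hb 1 false
    cases b0 <;> simp at hb0 hb1 hb2 hb3 <;>
    linarith [e1 0 0, e1 0 1, e1 1 0, e1 1 1, e2 true 0, e2 true 1, e2 false 0, e2 false 1,
      e3 true 0, e3 true 1, e3 false 0, e3 false 1,
      n true true 0 0, n true false 0 0, n false true 0 0, n false false 0 0,
      n true true 0 1, n true false 0 1, n false true 0 1, n false false 0 1,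
      n true true 1 0, n true false 1 0, n false true 1 0, n false false 1 0,
      n true true 1 1, n true false 1 1, n false true 1 1, n false false 1 1]
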